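/- Let T and X be measurable spaces, 𝕄 a finite signed measure on T, and m : T → (finite signed measures on X) a family such that for every measurable E ⊆ X the map t ↦ (m t)(E) is measurable. Suppose there are a subset B ⊆ X and γ > 0 such that each m t is supported by B with ‖m t‖ ≤ γ. Let κ be the finite signed measure on X defined by κ(E) = ∫_T (m t)(E) d𝕄(t). Then the total variation norm of κ satisfies ‖κ‖ ≤ γ · ‖𝕄‖. -/

import Mathlib

open MeasureTheory

/-- The integral of a real-valued function with respect to a finite signed measure,
defined via the Jordan decomposition: `∫ f dμ = ∫ f dμ⁺ − ∫ f dμ⁻`. -/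
noncomputable def sintegral {X : Type*} [MeasurableSpace X] (μ : SignedMeasure X) (f : X → ℝ) : ℝ :=
  (∫ x, f x ∂μ.toJordanDecomposition.posPart) - ∫ x, f x ∂μ.toJordanDecomposition.negPart

/-- A function is integrable with respect to a finite signed measure `μ` if it is
integrable with respect to the total variation measure `|μ| = μ⁺ + μ⁻`. -/
def SIntegrable {X : Type*} [MeasurableSpace X] (μ : SignedMeasure X) (f : X → ℝ) : Prop :=
  Integrable f μ.totalVariation

/-- The total variation norm of a finite signed measure: `‖μ‖ = |μ|(X)`. -/
noncomputable def tvNorm {X : Type*} [MeasurableSpace X] (μ : SignedMeasure X) : ℝ :=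
  (μ.totalVariation Set.univ).toReal

theorem tvNorm_eq_aux {X : Type*} [MeasurableSpace X] (μ : SignedMeasure X) :
    tvNorm μ = μ.toJordanDecomposition.posPart.real Set.univ
      + μ.toJordanDecomposition.negPart.real Set.univ := by
  unfold tvNorm SignedMeasure.totalVariation
  rw [Measure.add_apply, ENNReal.toReal_add (measure_ne_top _ _) (measure_ne_top _ _)]
  rfl

theorem abs_sub_compl_le_aux {X : Type*} [MeasurableSpace X] (μ : SignedMeasure X)
    {A : Set X} (hA : MeasurableSet A) : |μ A - μ Aᶜ| ≤ tvNorm μ := by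
  rw [tvNorm_eq_aux, μ.apply_eq_posPart_real_sub_negPart_real hA,
    μ.apply_eq_posPart_real_sub_negPart_real hA.compl,
    ← measureReal_add_measureReal_compl (μ := μ.toJordanDecomposition.posPart) hA,
    ← measureReal_add_measureReal_compl (μ := μ.toJordanDecomposition.negPart) hA]
  have h1 := measureReal_nonneg (μ := μ.toJordanDecomposition.posPart) (s := A)
  have h2 := measureReal_nonneg (μ := μ.toJordanDecomposition.posPart) (s := Aᶜ)
  have h3 := measureReal_nonneg (μ := μ.toJordanDecomposition.negPart) (s := A)
  have h4 := measureReal_nonneg (μ := μ.toJordanDecomposition.negPart) (s := Aᶜ)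
  rw [abs_le]
  constructor <;> linarith

theorem exists_tvNorm_eq_aux {X : Type*} [MeasurableSpace X] (μ : SignedMeasure X) :
    ∃ A : Set X, MeasurableSet A ∧ tvNorm μ = μ A - μ Aᶜ := by
  obtain ⟨S, hS, hp, hn⟩ := μ.toJordanDecomposition.mutuallySingular
  refine ⟨Sᶜ, hS.compl, ?_⟩
  have hp' : μ.toJordanDecomposition.posPart.real S = 0 := by simp [measureReal_def, hp]
  have hn' : μ.toJordanDecomposition.negPart.real Sᶜ = 0 := by simp [measureReal_def, hn]
  rw [compl_compl, tvNorm_eq_aux, μ.apply_eq_posPart_real_sub_negPart_real hS,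
    μ.apply_eq_posPart_real_sub_negPart_real hS.compl,
    ← measureReal_add_measureReal_compl (μ := μ.toJordanDecomposition.posPart) hS,
    ← measureReal_add_measureReal_compl (μ := μ.toJordanDecomposition.negPart) hS, hp', hn']
  ring

theorem abs_apply_le_aux {X : Type*} [MeasurableSpace X] (μ : SignedMeasure X)
    {A : Set X} (hA : MeasurableSet A) : |μ A| ≤ tvNorm μ := by
  rw [tvNorm_eq_aux, μ.apply_eq_posPart_real_sub_negPart_real hA]
  have h1 := measureReal_nonneg (μ := μ.toJordanDecomposition.posPart) (s := A)
  have h3 := measureReal_nonneg (μ := μ.toJordanDecomposition.negPart) (s := A)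
  have h2 := measureReal_mono (μ := μ.toJordanDecomposition.posPart) (Set.subset_univ A)
  have h4 := measureReal_mono (μ := μ.toJordanDecomposition.negPart) (Set.subset_univ A)
  rw [abs_le]
  constructor <;> linarith

/-- With `m t` all supported by `B` with `‖m t‖ ≤ γ`, and `κ` the signed
measure `E ↦ ∫_T (m t)(E) d𝕄(t)`, one has `‖κ‖ ≤ γ · ‖𝕄‖`. -/
theorem stmt10 {T X : Type*} [MeasurableSpace T] [MeasurableSpace X]
    (𝕄 : SignedMeasure T) (m : T → SignedMeasure X)
    (hmeas : ∀ E : Set X, MeasurableSet E → Measurable fun t => m t E)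
    (B : Set X) (γ : ℝ) (hγ : 0 < γ)
    (hsupp : ∀ t, ∃ ν : SignedMeasure B, m t = ν.map (Subtype.val : B → X))
    (hbound : ∀ t, tvNorm (m t) ≤ γ)
    (κ : SignedMeasure X)
    (hκ : ∀ E : Set X, MeasurableSet E → κ E = sintegral 𝕄 fun t => m t E) :
    tvNorm κ ≤ γ * tvNorm 𝕄 := by
  obtain ⟨A, hA, hAeq⟩ := exists_tvNorm_eq_aux κ
  have hint : ∀ (E : Set X), MeasurableSet E → ∀ (P : Measure T) [IsFiniteMeasure P],
      Integrable (fun t => m t E) P := by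
    intro E hE P _
    refine Integrable.of_bound (hmeas E hE).aestronglyMeasurable γ (ae_of_all _ fun t => ?_)
    exact (abs_apply_le_aux (m t) hE).trans (hbound t)
  have key : ∀ (P : Measure T) [IsFiniteMeasure P],
      |∫ t, m t A ∂P - ∫ t, m t Aᶜ ∂P| ≤ γ * P.real Set.univ := by
    intro P _
    rw [← integral_sub (hint A hA P) (hint _ hA.compl P)]
    exact norm_integral_le_of_norm_le_const (f := fun t => m t A - m t Aᶜ) (C := γ)
      (ae_of_all _ fun t => (abs_sub_compl_le_aux (m t) hA).trans (hbound t))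
  have k1 := abs_le.1 (key 𝕄.toJordanDecomposition.posPart)
  have k2 := abs_le.1 (key 𝕄.toJordanDecomposition.negPart)
  rw [hAeq, hκ A hA, hκ _ hA.compl, tvNorm_eq_aux, mul_add]
  unfold sintegral
  linarith [k1.2, k2.1]
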